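/- Let F be a free group and R, S, T normal subgroups of F with R ⊆ S and R ⊆ T, and let 𝐫, 𝐬, 𝐭 be the two-sided ideals of ℤ[F] generated by the augmentation ideals of R, S, T. If a ∈ D(F, 𝐬𝐫𝐭 + 𝐭𝐫𝐬), then a² ∈ D(F, 𝐫𝐫𝐬 + 𝐬𝐫𝐫 + 𝐭𝐫𝐫 + 𝐫𝐫𝐭). -/

import Mathlib

/-! Group-ring preliminaries: for a subgroup `N` of `F`, `aug N` is the additive
subgroup `Δ(N)` of `ℤ[F]` generated by `{n - 1 : n ∈ N}`, and `augI N = Δ(N)ℤ[F]`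
is the corresponding (for normal `N` two-sided) ideal of `ℤ[F]`.  Products of
submodules are additive spans of products, as in the paper. -/

/-- the augmentation ideal `Δ(N)` of a subgroup `N ≤ F`, inside `ℤ[F]` -/
noncomputable def aug {F : Type} [Group F] (N : Subgroup F) :
    Submodule ℤ (MonoidAlgebra ℤ F) :=
  Submodule.span ℤ {x | ∃ n ∈ N, x = (MonoidAlgebra.of ℤ F n) - 1}

/-- the ideal `𝐧 = Δ(N)ℤ[F]` of `ℤ[F]` -/
noncomputable def augI {F : Type} [Group F] (N : Subgroup F) :
    Submodule ℤ (MonoidAlgebra ℤ F) :=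
  aug N * ⊤


namespace Stohr

/-- induction principle for free groups -/
lemma free_ind {F : Type} [Group F] [IsFreeGroup F] {P : F → Prop} (h1 : P 1)
    (hof : ∀ x : IsFreeGroup.Generators F, P (IsFreeGroup.of x))
    (hinv : ∀ g, P g → P g⁻¹) (hmul : ∀ g h, P g → P h → P (g * h)) (g : F) : P g := by
  obtain ⟨w, rfl⟩ := (IsFreeGroup.mulEquiv F).surjective g
  induction w using FreeGroup.induction_on with
  | C1 => simpa using h1
  | of x => exact hof x
  | inv_of x hx => rw [map_inv]; exact hinv _ hx
  | mul x y hx hy => rw [map_mul]; exact hmul _ _ hx hy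

/-- existence of crossed homomorphisms on a free group -/
lemma exists_deriv {F : Type} [Group F] [IsFreeGroup F] {N : Type*} [AddCommGroup N]
    (act : F → N →+ N) (h1 : ∀ n, act 1 n = n) (hm : ∀ g h n, act (g * h) n = act g (act h n))
    (f : IsFreeGroup.Generators F → N) :
    ∃ d : F → N, (∀ g h, d (g * h) = d g + act g (d h)) ∧
      ∀ x, d (IsFreeGroup.of x) = f x := by
  let θ : F →* Equiv.Perm N := IsFreeGroup.lift (fun x =>
    { toFun := fun n => act (IsFreeGroup.of x) n + f x
      invFun := fun n => act (IsFreeGroup.of x)⁻¹ (n - f x)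
      left_inv := fun n => by simp [← hm, h1]
      right_inv := fun n => by simp [← hm, h1] })
  have hof : ∀ x n, θ (IsFreeGroup.of x) n = act (IsFreeGroup.of x) n + f x := by
    intro x n
    simp [θ]
  have key : ∀ g n, θ g n = act g n + θ g 0 := by
    intro g
    induction g using free_ind with
    | h1 => intro n; simp [h1]
    | hof x => intro n; rw [hof, hof]; simp
    | hinv g ih =>
      intro n
      rw [map_inv, Equiv.Perm.inv_eq_iff_eq, ih, map_add, ← hm, mul_inv_cancel, h1, add_assoc,
        ← ih, ← Equiv.Perm.mul_apply]
      simp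
    | hmul g h ihg ihh =>
      intro n
      rw [map_mul, Equiv.Perm.mul_apply, Equiv.Perm.mul_apply, ihh, ihg, map_add, ← hm, ihg (θ h 0),
        add_assoc]
  refine ⟨fun g => θ g 0, fun g h => ?_, fun x => ?_⟩
  · change θ (g * h) 0 = θ g 0 + act g (θ h 0)
    rw [map_mul, Equiv.Perm.mul_apply, key g, add_comm]
  · simp [hof]

/-- bilinear extension -/
noncomputable def bil {A B Q : Type*} [AddCommGroup Q] (f : A → B → Q) :
    (A →₀ ℤ) →ₗ[ℤ] (B →₀ ℤ) →ₗ[ℤ] Q :=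
  Finsupp.linearCombination ℤ (fun a => Finsupp.linearCombination ℤ (f a))

lemma bil_single {A B Q : Type*} [AddCommGroup Q] (f : A → B → Q) (a : A) (b : B) :
    bil f (Finsupp.single a 1) (Finsupp.single b 1) = f a b := by
  simp [bil]

lemma bil_ext {A B Q : Type*} [AddCommGroup Q] {f g : (A →₀ ℤ) →ₗ[ℤ] (B →₀ ℤ) →ₗ[ℤ] Q}
    (h : ∀ a b, f (Finsupp.single a 1) (Finsupp.single b 1) =
      g (Finsupp.single a 1) (Finsupp.single b 1)) : f = g := by
  ext a b
  simpa using h a b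

section core

variable {F : Type} [Group F] {R : Subgroup F} [R.Normal] {V Q X : Type*} [AddCommGroup V]
  [AddCommGroup Q]

/-- the loop obtained from `k` starting at the vertex `a` -/
def lam (ι : F → V) (σ : F ⧸ R → F) (a : F ⧸ R) (k : F) : V :=
  ι (σ a * k * (σ (a * (k : F ⧸ R)))⁻¹)

/-- the pairing of two edges -/
def phi0 (β : V →ₗ[ℤ] V →ₗ[ℤ] Q) (ι : F → V) (σ : F ⧸ R → F) (gen : X → F)
    (p q : (F ⧸ R) × X) : Q :=
  let a := p.1
  let x := gen p.2
  let a' := a * (x : F ⧸ R)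
  let b := q.1
  let y := gen q.2
  let b' := b * (y : F ⧸ R)
  β (lam ι σ b (σ (b⁻¹ * a') * σ (a'⁻¹ * b) * 1⁻¹))
      (lam ι σ a (x * σ (a'⁻¹ * b) * (σ (a⁻¹ * b))⁻¹))
  - β (lam ι σ b (σ (b⁻¹ * a) * x * (σ (b⁻¹ * a'))⁻¹))
      (lam ι σ a (σ (a⁻¹ * b) * y * (σ (a⁻¹ * b'))⁻¹))
  - β (lam ι σ b (σ (b⁻¹ * a') * σ (a'⁻¹ * b') * y⁻¹))
      (lam ι σ a (x * σ (a'⁻¹ * b') * (σ (a⁻¹ * b'))⁻¹))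

variable (β : V →ₗ[ℤ] V →ₗ[ℤ] Q) (ι : F → V) (σ : F ⧸ R → F) (gen : X → F)

section

lemma lam_mul
    (hσ : ∀ a, (σ a : F ⧸ R) = a) (hι : ∀ u ∈ R, ∀ v ∈ R, ι (u * v) = ι u + ι v)
    (a : F ⧸ R) (k l : F) :
    lam ι σ a (k * l) = lam ι σ a k + lam ι σ (a * (k : F ⧸ R)) l := by
  unfold lam
  rw [← hι]
  · congr 1
    rw [QuotientGroup.mk_mul, mul_assoc a]
    group
  · rw [← QuotientGroup.eq_one_iff]; simp [hσ]
  · rw [← QuotientGroup.eq_one_iff]; simp [hσ]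

lemma lam_one
    (hσ : ∀ a, (σ a : F ⧸ R) = a) (hι : ∀ u ∈ R, ∀ v ∈ R, ι (u * v) = ι u + ι v)
    (a : F ⧸ R) : lam ι σ a 1 = 0 := by
  have := lam_mul ι σ hσ hι a 1 1
  simpa using this

lemma lam_inv
    (hσ : ∀ a, (σ a : F ⧸ R) = a) (hι : ∀ u ∈ R, ∀ v ∈ R, ι (u * v) = ι u + ι v)
    (a : F ⧸ R) (k : F) :
    lam ι σ a k⁻¹ = - lam ι σ (a * (k : F ⧸ R)⁻¹) k := by
  have := lam_mul ι σ hσ hι a k⁻¹ k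
  rw [inv_mul_cancel, lam_one ι σ hσ hι, QuotientGroup.mk_inv] at this
  exact eq_neg_of_add_eq_zero_left this.symm

lemma lam_loop
    (hσ : ∀ a, (σ a : F ⧸ R) = a) (hι : ∀ u ∈ R, ∀ v ∈ R, ι (u * v) = ι u + ι v)
    (b : F ⧸ R) (k l m : F) (h : (k : F ⧸ R) * l = m) :
    lam ι σ b (k * l * m⁻¹) = lam ι σ b k + lam ι σ (b * (k : F ⧸ R)) l - lam ι σ b m := by
  rw [lam_mul ι σ hσ hι, lam_mul ι σ hσ hι, lam_inv ι σ hσ hι]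
  have : b * ((k * l : F) : F ⧸ R) * (m : F ⧸ R)⁻¹ = b := by
    rw [QuotientGroup.mk_mul, h]; group
  rw [this, sub_eq_add_neg]

lemma iota_conj
    (hσ : ∀ a, (σ a : F ⧸ R) = a) (hι : ∀ u ∈ R, ∀ v ∈ R, ι (u * v) = ι u + ι v)
    (u y : F) (hu : u ∈ R) (hy : y ∈ R) : ι (u * y * u⁻¹) = ι y := by
  have h1 : ι 1 = 0 := by
    have := hι 1 (one_mem _) 1 (one_mem _)
    simpa using this
  have h2 := hι u hu u⁻¹ (inv_mem hu)
  rw [mul_inv_cancel, h1] at h2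
  rw [hι _ (mul_mem hu hy) _ (inv_mem hu), hι _ hu _ hy, add_comm (ι u), add_assoc, ← h2, add_zero]

lemma beta_inv
    (hσ : ∀ a, (σ a : F ⧸ R) = a) (hι : ∀ u ∈ R, ∀ v ∈ R, ι (u * v) = ι u + ι v)
   
    (hβ : ∀ g : F, ∀ u ∈ R, ∀ v ∈ R, β (ι (g * u * g⁻¹)) (ι (g * v * g⁻¹)) = β (ι u) (ι v))
    (g : F) (a b : F ⧸ R) (u v : F) (hu : (u : F ⧸ R) = 1) (hv : (v : F ⧸ R) = 1) :
    β (lam ι σ (g * a) u) (lam ι σ (g * b) v) = β (lam ι σ a u) (lam ι σ b v) := by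
  have key : ∀ (a : F ⧸ R) (u : F), (u : F ⧸ R) = 1 →
      lam ι σ (g * a) u = ι (g * (σ a * u * (σ a)⁻¹) * g⁻¹) := by
    intro a u hu
    have hu' : u ∈ R := (QuotientGroup.eq_one_iff u).1 hu
    unfold lam
    rw [hu, mul_one]
    have : σ (g * a) * u * (σ (g * a))⁻¹ =
      (σ (g * a) * (g * σ a)⁻¹) * (g * (σ a * u * (σ a)⁻¹) * g⁻¹) *
        (σ (g * a) * (g * σ a)⁻¹)⁻¹ := by group
    rw [this, iota_conj ι σ hσ hι]
    · rw [← QuotientGroup.eq_one_iff]; simp [hσ]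
    · rw [← QuotientGroup.eq_one_iff]; simp [hu]
  rw [key a u hu, key b v hv, hβ]
  · unfold lam
    rw [hu, hv, mul_one, mul_one]
  · rw [← QuotientGroup.eq_one_iff]; simp [hu]
  · rw [← QuotientGroup.eq_one_iff]; simp [hv]

lemma phi0_inv
    (hσ : ∀ a, (σ a : F ⧸ R) = a) (hι : ∀ u ∈ R, ∀ v ∈ R, ι (u * v) = ι u + ι v)
   
    (hβ : ∀ g : F, ∀ u ∈ R, ∀ v ∈ R, β (ι (g * u * g⁻¹)) (ι (g * v * g⁻¹)) = β (ι u) (ι v))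
    (g : F) (p q : (F ⧸ R) × X) :
    phi0 β ι σ gen (g * p.1, p.2) (g * q.1, q.2) = phi0 β ι σ gen p q := by
  have e : ∀ a b : F ⧸ R, (g * a)⁻¹ * (g * b) = a⁻¹ * b := by intro a b; group
  simp only [phi0, mul_assoc (g : F ⧸ R), e]
  rw [beta_inv β ι σ hσ hι hβ, beta_inv β ι σ hσ hι hβ, beta_inv β ι σ hσ hι hβ]
  all_goals simp [hσ]
  all_goals group

lemma phi0_eq
    (hσ : ∀ a, (σ a : F ⧸ R) = a) (hι : ∀ u ∈ R, ∀ v ∈ R, ι (u * v) = ι u + ι v)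
    (a : F ⧸ R) (x : X) (b : F ⧸ R) (y : X) :
    let E := fun a b : F ⧸ R => lam ι σ a (σ (a⁻¹ * b))
    let a' := a * (gen x : F ⧸ R)
    let b' := b * (gen y : F ⧸ R)
    let e := lam ι σ a (gen x)
    let ε := lam ι σ b (gen y)
    phi0 β ι σ gen (a, x) (b, y) =
      β (E b a' + E a' b) (e + E a' b - E a b)
      - β (E b a + e - E b a') (E a b + ε - E a b')
      - β (E b a' + E a' b' - ε) (e + E a' b' - E a b') := by
  intro E a' b' e ε
  have c : ∀ a b : F ⧸ R, a * (a⁻¹ * b) = b := by intro a b; group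
  simp only [phi0]
  rw [lam_loop ι σ hσ hι, lam_loop ι σ hσ hι, lam_loop ι σ hσ hι, lam_loop ι σ hσ hι,
    lam_loop ι σ hσ hι, lam_loop ι σ hσ hι]
  · simp only [hσ, c, lam_one ι σ hσ hι, sub_zero, E, a', b', e, ε]
  all_goals simp [hσ]
  all_goals group

end

/-- translation of chains -/
noncomputable def T (R : Subgroup F) [R.Normal] (X : Type*) (g : F) :
    ((F ⧸ R) × X →₀ ℤ) →ₗ[ℤ] ((F ⧸ R) × X →₀ ℤ) :=
  Finsupp.lmapDomain ℤ ℤ (fun p => ((g : F ⧸ R) * p.1, p.2))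

lemma T_single (g : F) (p : (F ⧸ R) × X) (n : ℤ) :
    T R X g (Finsupp.single p n) = Finsupp.single ((g : F ⧸ R) * p.1, p.2) n := by
  simp [T, Finsupp.mapDomain_single]

lemma T_one (p : (F ⧸ R) × X →₀ ℤ) : T R X 1 p = p := by
  have : T R X (1 : F) = LinearMap.id := by
    ext p : 2
    simp [T_single]
  rw [this]; rfl

lemma T_mul (g h : F) (p : (F ⧸ R) × X →₀ ℤ) : T R X (g * h) p = T R X g (T R X h p) := by
  have : T R X (g * h) = T R X g ∘ₗ T R X h := by
    ext p : 2
    simp [T_single, mul_assoc]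
  rw [this]; rfl

lemma T_mem (u : F) (hu : u ∈ R) (p : (F ⧸ R) × X →₀ ℤ) : T R X u p = p := by
  have : T R X u = LinearMap.id := by
    ext p : 2
    simp [T_single, (QuotientGroup.eq_one_iff u).2 hu]
  rw [this]; rfl

/-- value of chains -/
noncomputable def Lam : ((F ⧸ R) × X →₀ ℤ) →ₗ[ℤ] V :=
  Finsupp.linearCombination ℤ (fun p => lam ι σ p.1 (gen p.2))

/-- boundary of chains -/
noncomputable def bd (R : Subgroup F) [R.Normal] (gen : X → F) :
    ((F ⧸ R) × X →₀ ℤ) →ₗ[ℤ] (F ⧸ R →₀ ℤ) :=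
  Finsupp.linearCombination ℤ
    (fun p => Finsupp.single (p.1 * (gen p.2 : F ⧸ R)) 1 - Finsupp.single p.1 1)

lemma phi_eq (hσ : ∀ a, (σ a : F ⧸ R) = a) (hι : ∀ u ∈ R, ∀ v ∈ R, ι (u * v) = ι u + ι v)
    (p q : (F ⧸ R) × X →₀ ℤ) (hp : bd R gen p = 0) (hq : bd R gen q = 0) :
    bil (phi0 β ι σ gen) p q =
      β (Lam ι σ gen q) (Lam ι σ gen p) - β (Lam ι σ gen p) (Lam ι σ gen q) := by
  let E := fun a b : F ⧸ R => lam ι σ a (σ (a⁻¹ * b))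
  let g1 : F ⧸ R → (F ⧸ R) × X → Q := fun a q =>
    β (E q.1 a) (lam ι σ q.1 (gen q.2))
      + β (lam ι σ q.1 (gen q.2)) (E a (q.1 * (gen q.2 : F ⧸ R)))
      + β (E q.1 a) (E a q.1) - β (E q.1 a) (E a (q.1 * (gen q.2 : F ⧸ R)))
  let g2 : (F ⧸ R) × X → F ⧸ R → Q := fun p b =>
    β (lam ι σ p.1 (gen p.2)) (E p.1 b)
      - β (E (p.1 * (gen p.2 : F ⧸ R)) b) (lam ι σ p.1 (gen p.2))
      - β (E (p.1 * (gen p.2 : F ⧸ R)) b) (E (p.1 * (gen p.2 : F ⧸ R)) b)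
      + β (E (p.1 * (gen p.2 : F ⧸ R)) b) (E p.1 b)
  have key : bil (phi0 β ι σ gen) =
      (β.flip.compl₁₂ (Lam ι σ gen) (Lam ι σ gen)) - (β.compl₁₂ (Lam ι σ gen) (Lam ι σ gen))
      + (bil g1).compl₁₂ (bd R gen) LinearMap.id + (bil g2).compl₁₂ LinearMap.id (bd R gen) := by
    apply bil_ext
    rintro ⟨a, x⟩ ⟨b, y⟩
    rw [bil_single, phi0_eq β ι σ gen hσ hι]
    simp only [LinearMap.add_apply, LinearMap.sub_apply, LinearMap.compl₁₂_apply,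
      LinearMap.flip_apply, LinearMap.id_apply, Lam, bd, Finsupp.linearCombination_single,
      one_smul, map_sub, bil_single, map_add, g1, g2, E]
    abel
  rw [key]
  simp [hp, hq]

lemma phi_inv (hσ : ∀ a, (σ a : F ⧸ R) = a) (hι : ∀ u ∈ R, ∀ v ∈ R, ι (u * v) = ι u + ι v)
    (hβ : ∀ g : F, ∀ u ∈ R, ∀ v ∈ R, β (ι (g * u * g⁻¹)) (ι (g * v * g⁻¹)) = β (ι u) (ι v))
    (g : F) (p q : (F ⧸ R) × X →₀ ℤ) :
    bil (phi0 β ι σ gen) (T R X g p) (T R X g q) = bil (phi0 β ι σ gen) p q := by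
  have : (bil (phi0 β ι σ gen)).compl₁₂ (T R X g) (T R X g) = bil (phi0 β ι σ gen) := by
    apply bil_ext
    intro p q
    rw [LinearMap.compl₁₂_apply, T_single, T_single, bil_single, bil_single,
      phi0_inv β ι σ gen hσ hι hβ]
  rw [← LinearMap.compl₁₂_apply, this]

end core

/-- additive extension of a function on `F` to the group ring -/
noncomputable def ext {F : Type} [Group F] {Q : Type*} [AddCommGroup Q] (f : F → Q) :
    MonoidAlgebra ℤ F →ₗ[ℤ] Q :=
  Finsupp.linearCombination ℤ f ∘ₗ (MonoidAlgebra.coeffLinearEquiv ℤ).toLinearMap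

lemma ext_of {F : Type} [Group F] {Q : Type*} [AddCommGroup Q] (f : F → Q) (g : F) :
    ext f (MonoidAlgebra.of ℤ F g) = f g := by
  simp [ext, MonoidAlgebra.of_apply]

open MonoidAlgebra in
lemma ext_one {F : Type} [Group F] {Q : Type*} [AddCommGroup Q] (f : F → Q) :
    ext f 1 = f 1 := by
  rw [← ext_of f, (of ℤ F).map_one]

open MonoidAlgebra in
lemma core_exists {F : Type} [Group F] [IsFreeGroup F] {R : Subgroup F} [R.Normal]
    {V Q : Type*} [AddCommGroup V] [AddCommGroup Q]
    (β : V →ₗ[ℤ] V →ₗ[ℤ] Q) (ι : F → V) (hι : ∀ u ∈ R, ∀ v ∈ R, ι (u * v) = ι u + ι v)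
    (hβ : ∀ g : F, ∀ u ∈ R, ∀ v ∈ R, β (ι (g * u * g⁻¹)) (ι (g * v * g⁻¹)) = β (ι u) (ι v)) :
    ∃ Φ : MonoidAlgebra ℤ F →ₗ[ℤ] Q,
      (∀ g h : F, ∀ u ∈ R, Φ ((of ℤ F g - 1) * (of ℤ F u - 1) * (of ℤ F h - 1)) = 0) ∧
      (∀ u ∈ R, ∀ v ∈ R, Φ ((of ℤ F u - 1) * (of ℤ F v - 1)) =
        β (ι v) (ι u) - β (ι u) (ι v)) := by
  classical
  let σ : F ⧸ R → F := fun a => if a = 1 then 1 else a.out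
  have hσ : ∀ a, (σ a : F ⧸ R) = a := by
    intro a
    by_cases h : a = 1 <;> simp [σ, h]
  have hσ1 : σ 1 = 1 := by simp [σ]
  let X := IsFreeGroup.Generators F
  let gen : X → F := IsFreeGroup.of
  let φ := bil (phi0 β ι σ gen)
  have hφ := phi_inv β ι σ gen hσ hι hβ
  obtain ⟨c, hc, hcx⟩ := exists_deriv (fun g => (T R X g).toAddMonoidHom) (fun n => T_one n)
    (fun g h n => T_mul g h n) (fun x => Finsupp.single ((1 : F ⧸ R), x) 1)
  have hc : ∀ g h, c (g * h) = c g + T R X g (c h) := hc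
  have hc1 : c 1 = 0 := by
    have := hc 1 1
    rw [T_one] at this
    simpa using this
  have hcinv : ∀ g, T R X g (c g⁻¹) = - c g := by
    intro g
    have := hc g g⁻¹
    rw [mul_inv_cancel, hc1] at this
    exact (neg_eq_of_add_eq_zero_right this.symm).symm
  have hlam : ∀ k g, Lam ι σ gen (T R X g (c k)) = lam ι σ (g : F ⧸ R) k := by
    intro k
    induction k using free_ind with
    | h1 => intro g; rw [hc1, lam_one ι σ hσ hι]; simp
    | hof x => intro g; rw [hcx, T_single]; simp [Lam, gen]
    | hinv k ih =>
      intro g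
      have : T R X g (c k⁻¹) = - T R X (g * k⁻¹) (c k) := by
        rw [T_mul, ← map_neg]
        congr 1
        have := hcinv k⁻¹
        rw [inv_inv] at this
        rw [this, neg_neg]
      rw [this, map_neg, ih, lam_inv ι σ hσ hι]
      simp
    | hmul k l ihk ihl =>
      intro g
      rw [hc, map_add, map_add, ← T_mul, ihk, ihl, lam_mul ι σ hσ hι]
      simp
  have hbd : ∀ k g, bd R gen (T R X g (c k)) =
      Finsupp.single ((g * k : F) : F ⧸ R) 1 - Finsupp.single (g : F ⧸ R) 1 := by
    intro k
    induction k using free_ind with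
    | h1 => intro g; rw [hc1]; simp
    | hof x => intro g; rw [hcx, T_single]; simp [bd, gen]
    | hinv k ih =>
      intro g
      have : T R X g (c k⁻¹) = - T R X (g * k⁻¹) (c k) := by
        rw [T_mul, ← map_neg]
        congr 1
        have := hcinv k⁻¹
        rw [inv_inv] at this
        rw [this, neg_neg]
      rw [this, map_neg, ih]
      simp
    | hmul k l ihk ihl =>
      intro g
      rw [hc, map_add, map_add, ← T_mul, ihk, ihl]
      simp [mul_assoc]
  have hR : ∀ u ∈ R, Lam ι σ gen (c u) = ι u ∧ bd R gen (c u) = 0 := by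
    intro u hu
    have h1 := hlam u 1
    have h2 := hbd u 1
    have hu' := (QuotientGroup.eq_one_iff u).2 hu
    rw [T_one] at h1 h2
    constructor
    · rw [h1]; simp [lam, hσ1, hu']
    · rw [h2]; simp [hu']
  -- the second derivation
  let act : F → (Q × ((F ⧸ R) × X →₀ ℤ)) →+ (Q × ((F ⧸ R) × X →₀ ℤ)) := fun g =>
    { toFun := fun n => (n.1 - φ (c g) (T R X g n.2), T R X g n.2)
      map_zero' := by simp
      map_add' := fun m n => by
        simp only [Prod.fst_add, Prod.snd_add, map_add, Prod.mk_add_mk, Prod.mk.injEq, and_true]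
        abel }
  have hact : ∀ g n, act g n = (n.1 - φ (c g) (T R X g n.2), T R X g n.2) := fun g n => rfl
  obtain ⟨d, hd, hdx⟩ := exists_deriv act (fun n => by simp [hact, hc1, T_one])
    (fun g h n => by
      simp only [hact, hc, T_mul, map_add, LinearMap.add_apply, Prod.mk.injEq, and_true]
      have := hφ g (c h) (T R X h n.2)
      change n.1 - (φ (c g) _ + φ (T R X g (c h)) _) = _
      change φ _ _ = φ _ _ at this
      rw [this]
      abel) (fun x => ((0 : Q), Finsupp.single ((1 : F ⧸ R), x) 1))
  have hd1 : d 1 = 0 := by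
    have := hd 1 1
    have h2 : act 1 (d 1) = d 1 := by simp [hact, hc1, T_one]
    rw [h2] at this
    simpa using this
  have hdc : ∀ g, (d g).2 = c g := by
    intro g
    induction g using free_ind with
    | h1 => rw [hd1, hc1]; rfl
    | hof x => rw [hdx, hcx]
    | hinv g ih =>
      have h1 := congrArg Prod.snd (hd g⁻¹ g)
      have h2 := hc g⁻¹ g
      rw [inv_mul_cancel, hc1] at h2
      rw [inv_mul_cancel, hd1, hact, Prod.snd_add] at h1
      simp only [ih, Prod.snd_zero] at h1
      exact add_right_cancel (h1.symm.trans h2)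
    | hmul g h ihg ihh =>
      rw [hd, hc, hact, Prod.snd_add, ihg]
      simp only [ihh]
  have hΦ : ∀ g h, (d (g * h)).1 = (d g).1 + ((d h).1 - φ (c g) (T R X g (c h))) := by
    intro g h
    rw [hd, Prod.fst_add, hact, hdc]
  refine ⟨- ext (fun g => (d g).1), ?_, ?_⟩
  · intro g h u hu
    have e : (of ℤ F g - 1) * (of ℤ F u - 1) * (of ℤ F h - 1) =
        of ℤ F (g * u * h) - of ℤ F (u * h) - of ℤ F (g * h) + of ℤ F h
        - of ℤ F (g * u) + of ℤ F u + of ℤ F g - 1 := by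
      simp only [map_mul]
      noncomm_ring
    rw [e]
    simp only [LinearMap.neg_apply, map_add, map_sub, ext_of, ext_one, hΦ, hd1, hc, T_mul, T_mem u hu,
      LinearMap.add_apply]
    have := hφ g (c u) (c h)
    change φ _ _ = φ _ _ at this
    rw [this]
    simp
    abel
  · intro u hu v hv
    have e : (of ℤ F u - 1) * (of ℤ F v - 1) =
        of ℤ F (u * v) - of ℤ F u - of ℤ F v + 1 := by
      simp only [map_mul]
      noncomm_ring
    rw [e]
    simp only [LinearMap.neg_apply, map_add, map_sub, ext_of, ext_one, hΦ, hd1, T_mem u hu]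
    have := phi_eq β ι σ gen hσ hι (c u) (c v) (hR u hu).2 (hR v hv).2
    rw [(hR u hu).1, (hR v hv).1] at this
    change φ _ _ = _ at this
    rw [← this]
    simp

lemma exists_bil {R : Type} [Group R] {Q : Type*} [AddCommGroup Q] (b : R → R → Q)
    (h1 : ∀ u u' v, b (u * u') v = b u v + b u' v)
    (h2 : ∀ u v v', b u (v * v') = b u v + b u v') :
    ∃ β : Additive (Abelianization R) →ₗ[ℤ] Additive (Abelianization R) →ₗ[ℤ] Q,
      ∀ u v, β (Additive.ofMul (Abelianization.of u)) (Additive.ofMul (Abelianization.of v)) =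
        b u v := by
  let b1 : R → (Additive (Abelianization R) →+ Q) := fun u =>
    MonoidHom.toAdditiveLeft (Abelianization.lift
      (MonoidHom.mk' (fun v => Multiplicative.ofAdd (b u v)) (fun v v' => by rw [h2]; rfl)))
  have hb1 : ∀ u v, b1 u (Additive.ofMul (Abelianization.of v)) = b u v := fun u v => rfl
  have hb1m : ∀ u u', b1 (u * u') = b1 u + b1 u' := by
    intro u u'
    ext v
    exact h1 u u' v
  let b2 : Additive (Abelianization R) →+ (Additive (Abelianization R) →+ Q) :=
    MonoidHom.toAdditiveLeft (Abelianization.lift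
      (MonoidHom.mk' (fun v => Multiplicative.ofAdd (b1 v)) (fun v v' => by rw [hb1m]; rfl)))
  have hb2 : ∀ u v, b2 (Additive.ofMul (Abelianization.of u))
    (Additive.ofMul (Abelianization.of v)) = b u v := fun u v => rfl
  refine ⟨((AddMonoidHom.mk' (fun x => (b2 x).toIntLinearMap) (fun x y => ?_))).toIntLinearMap,
    fun u v => hb2 u v⟩
  ext z
  simp

open MonoidAlgebra

lemma aug_mem {F : Type} [Group F] {N : Subgroup F} {n : F} (hn : n ∈ N) :
    of ℤ F n - 1 ∈ aug N := Submodule.subset_span ⟨n, hn, rfl⟩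

lemma aug2_le {F : Type} [Group F] {A B : Subgroup F} {M : Submodule ℤ (MonoidAlgebra ℤ F)}
    (h : ∀ a ∈ A, ∀ b ∈ B, (of ℤ F a - 1) * (of ℤ F b - 1) ∈ M) : aug A * aug B ≤ M := by
  unfold aug
  rw [Submodule.span_mul_span, Submodule.span_le]
  rintro _ ⟨_, ⟨a, ha, rfl⟩, _, ⟨b, hb, rfl⟩, rfl⟩
  exact h a ha b hb

lemma aug3_le {F : Type} [Group F] {A B C : Subgroup F} {M : Submodule ℤ (MonoidAlgebra ℤ F)}
    (h : ∀ a ∈ A, ∀ b ∈ B, ∀ c ∈ C,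
      (of ℤ F a - 1) * (of ℤ F b - 1) * (of ℤ F c - 1) ∈ M) : aug A * aug B * aug C ≤ M := by
  unfold aug
  rw [Submodule.span_mul_span, Submodule.span_mul_span, Submodule.span_le]
  rintro _ ⟨_, ⟨_, ⟨a, ha, rfl⟩, _, ⟨b, hb, rfl⟩, rfl⟩, _, ⟨c, hc, rfl⟩, rfl⟩
  exact h a ha b hb c hc

/-- step 1: `R ∩ (1 + frf) ⊆ 1 + Δ(R)²` -/
lemma mem_sq {F : Type} [Group F] {R : Subgroup F} [R.Normal] {a : F} (haR : a ∈ R)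
    (ha : of ℤ F a - 1 ∈ aug (⊤ : Subgroup F) * aug R * aug (⊤ : Subgroup F)) :
    of ℤ F a - 1 ∈ aug R * aug R := by
  classical
  let A := aug R * aug R
  let σ : F ⧸ R → F := fun a => if a = 1 then 1 else a.out
  have hσ : ∀ a, (σ a : F ⧸ R) = a := by
    intro a
    by_cases h : a = 1 <;> simp [σ, h]
  have hσ1 : σ 1 = 1 := by simp [σ]
  let r : F → F := fun g => (σ (g : F ⧸ R))⁻¹ * g
  have hr : ∀ g, r g ∈ R := by
    intro g
    rw [← QuotientGroup.eq_one_iff]; simp [r, hσ]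
  have hru : ∀ g, ∀ u ∈ R, r (g * u) = r g * u := by
    intro g u hu
    simp [r, (QuotientGroup.eq_one_iff u).2 hu, mul_assoc]
  have hrR : ∀ u ∈ R, r u = u := by
    intro u hu
    simp [r, (QuotientGroup.eq_one_iff u).2 hu, hσ1]
  let L : MonoidAlgebra ℤ F →ₗ[ℤ] (MonoidAlgebra ℤ F ⧸ A) :=
    ext (fun g => A.mkQ (of ℤ F (r g) - 1))
  have h2 : ∀ g : F, ∀ u ∈ R, L ((of ℤ F g - 1) * (of ℤ F u - 1)) = 0 := by
    intro g u hu
    have e : (of ℤ F g - 1) * (of ℤ F u - 1) =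
        of ℤ F (g * u) - of ℤ F g - of ℤ F u + 1 := by
      simp only [map_mul]
      noncomm_ring
    rw [e]
    simp only [L, map_add, map_sub, ext_of, ext_one, hru g u hu, hrR u hu, hrR 1 (one_mem _)]
    simp only [← map_sub, ← map_add]
    rw [Submodule.mkQ_apply, Submodule.Quotient.mk_eq_zero]
    have : (of ℤ F (r g) - 1) * (of ℤ F u - 1) ∈ A :=
      Submodule.mul_mem_mul (aug_mem (hr g)) (aug_mem hu)
    convert this using 1
    simp only [map_mul, map_one]
    noncomm_ring
  have h3 : aug (⊤ : Subgroup F) * aug R * aug (⊤ : Subgroup F) ≤ LinearMap.ker L := by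
    apply aug3_le
    intro g _ u hu h _
    have hu' : h⁻¹ * u * h ∈ R := by
      have := Subgroup.Normal.conj_mem (inferInstance : R.Normal) u hu h⁻¹
      simpa using this
    have e : (of ℤ F g - 1) * (of ℤ F u - 1) * (of ℤ F h - 1) =
      (of ℤ F (g * h) - 1) * (of ℤ F (h⁻¹ * u * h) - 1)
      - (of ℤ F h - 1) * (of ℤ F (h⁻¹ * u * h) - 1) - (of ℤ F g - 1) * (of ℤ F u - 1) := by
      have e1 : of ℤ F h * of ℤ F (h⁻¹ * u * h) = of ℤ F u * of ℤ F h := by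
        rw [← map_mul, ← map_mul]; congr 1; group
      have e2 : of ℤ F (g * h) * of ℤ F (h⁻¹ * u * h) = of ℤ F g * of ℤ F u * of ℤ F h := by
        rw [← map_mul, ← map_mul, ← map_mul]; congr 1; group
      simp only [mul_sub, sub_mul, e1, e2, mul_one, one_mul]
      rw [map_mul (of ℤ F) g h]
      abel
    rw [LinearMap.mem_ker, e, map_sub, map_sub, h2 _ _ hu', h2 _ _ hu', h2 _ _ hu]
    simp
  have h4 := h3 ha
  rw [LinearMap.mem_ker, map_sub] at h4
  simp only [L, ext_of, ext_one, hrR a haR, hrR 1 (one_mem _)] at h4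
  rw [map_one, sub_self, map_zero, sub_zero, Submodule.mkQ_apply,
    Submodule.Quotient.mk_eq_zero] at h4
  exact h4

lemma main_free {F : Type} [Group F] [IsFreeGroup F] {R : Subgroup F} [R.Normal] {a : F}
    (haR : a ∈ R)
    (ha : of ℤ F a - 1 ∈ aug (⊤ : Subgroup F) * aug R * aug (⊤ : Subgroup F)) :
    of ℤ F (a ^ 2) - 1 ∈ aug (⊤ : Subgroup F) * aug R * aug R +
      aug R * aug R * aug (⊤ : Subgroup F) := by
  classical
  set J := aug (⊤ : Subgroup F) * aug R * aug R + aug R * aug R * aug (⊤ : Subgroup F) with hJ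
  have ha2 := mem_sq haR ha
  have hJ1 : ∀ g : F, ∀ u ∈ R, ∀ v ∈ R,
      (of ℤ F g - 1) * ((of ℤ F u - 1) * (of ℤ F v - 1)) ∈ J := by
    intro g u hu v hv
    rw [← mul_assoc]
    exact Submodule.mem_sup_left (Submodule.mul_mem_mul (Submodule.mul_mem_mul
      (aug_mem (Subgroup.mem_top g)) (aug_mem hu)) (aug_mem hv))
  have hJ2 : ∀ g : F, ∀ u ∈ R, ∀ v ∈ R,
      (of ℤ F u - 1) * (of ℤ F v - 1) * (of ℤ F g - 1) ∈ J := by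
    intro g u hu v hv
    exact Submodule.mem_sup_right (Submodule.mul_mem_mul (Submodule.mul_mem_mul
      (aug_mem hu) (aug_mem hv)) (aug_mem (Subgroup.mem_top g)))
  let b : R → R → (MonoidAlgebra ℤ F ⧸ J) := fun u v =>
    J.mkQ ((of ℤ F (u : F) - 1) * (of ℤ F (v : F) - 1))
  have hb1 : ∀ u u' v, b (u * u') v = b u v + b u' v := by
    intro u u' v
    simp only [b]
    rw [← map_add, ← sub_eq_zero, ← map_sub, Submodule.mkQ_apply, Submodule.Quotient.mk_eq_zero]
    convert hJ1 (u : F) u' u'.2 v v.2 using 1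
    simp only [Subgroup.coe_mul, map_mul]
    noncomm_ring
  have hb2 : ∀ u v v', b u (v * v') = b u v + b u v' := by
    intro u v v'
    simp only [b]
    rw [← map_add, ← sub_eq_zero, ← map_sub, Submodule.mkQ_apply, Submodule.Quotient.mk_eq_zero]
    convert hJ2 (v' : F) u u.2 v v.2 using 1
    simp only [Subgroup.coe_mul, map_mul]
    noncomm_ring
  obtain ⟨β, hβ⟩ := exists_bil b hb1 hb2
  let ι : F → Additive (Abelianization R) := fun g =>
    if h : g ∈ R then Additive.ofMul (Abelianization.of ⟨g, h⟩) else 0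
  have hιR : ∀ u (hu : u ∈ R), ι u = Additive.ofMul (Abelianization.of ⟨u, hu⟩) := by
    intro u hu; simp [ι, hu]
  have hβι : ∀ u ∈ R, ∀ v ∈ R, β (ι u) (ι v) = J.mkQ ((of ℤ F u - 1) * (of ℤ F v - 1)) := by
    intro u hu v hv
    rw [hιR u hu, hιR v hv, hβ]
  have hι : ∀ u ∈ R, ∀ v ∈ R, ι (u * v) = ι u + ι v := by
    intro u hu v hv
    rw [hιR u hu, hιR v hv, hιR _ (mul_mem hu hv), ← ofMul_mul, ← map_mul]
    rfl
  have hinv : ∀ u ∈ R, ι u⁻¹ = - ι u := by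
    intro u hu
    rw [hιR u hu, hιR _ (inv_mem hu), ← ofMul_inv, ← map_inv]
    rfl
  obtain ⟨Φ, hΦ1, hΦ2⟩ := core_exists β ι hι (by
    intro g u hu v hv
    have hu' := Subgroup.Normal.conj_mem (inferInstance : R.Normal) u hu g
    have hv' := Subgroup.Normal.conj_mem (inferInstance : R.Normal) v hv g
    rw [hβι _ hu' _ hv', hβι _ hu _ hv, ← sub_eq_zero, ← map_sub, Submodule.mkQ_apply,
      Submodule.Quotient.mk_eq_zero]
    have := J.sub_mem (hJ1 g u hu v hv) (hJ2 g _ hu' _ hv')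
    convert this using 1
    have e1 : of ℤ F (g * u * g⁻¹) * of ℤ F g = of ℤ F g * of ℤ F u := by
      rw [← map_mul, ← map_mul]; congr 1; group
    have e2 : of ℤ F (g * v * g⁻¹) * of ℤ F g = of ℤ F g * of ℤ F v := by
      rw [← map_mul, ← map_mul]; congr 1; group
    have e3 : of ℤ F (g * u * g⁻¹) * (of ℤ F g * of ℤ F v) =
        of ℤ F g * (of ℤ F u * of ℤ F v) := by
      rw [← e2, ← map_mul, ← map_mul, ← map_mul, ← map_mul]; congr 1; group
    generalize of ℤ F (g * u * g⁻¹) = x at *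
    generalize of ℤ F (g * v * g⁻¹) = y at *
    simp only [mul_sub, sub_mul, e1, e2, e3, mul_one, one_mul, mul_assoc]
    abel)
  -- the involution
  let star : MonoidAlgebra ℤ F →ₗ[ℤ] MonoidAlgebra ℤ F := ext (fun g => of ℤ F g⁻¹)
  have hsq : aug R * aug R ≤ LinearMap.ker (Φ - (J.mkQ ∘ₗ star - J.mkQ)) := by
    apply aug2_le
    intro u hu v hv
    rw [LinearMap.mem_ker, LinearMap.sub_apply, hΦ2 u hu v hv, hβι u hu v hv]
    have e : star ((of ℤ F u - 1) * (of ℤ F v - 1)) =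
        (of ℤ F v⁻¹ - 1) * (of ℤ F u⁻¹ - 1) := by
      have e : (of ℤ F u - 1) * (of ℤ F v - 1) =
          of ℤ F (u * v) - of ℤ F u - of ℤ F v + 1 := by
        simp only [map_mul]
        noncomm_ring
      rw [e]
      simp only [star, map_add, map_sub, ext_of, ext_one, mul_inv_rev, inv_one, map_one]
      simp only [map_mul]
      noncomm_ring
    rw [LinearMap.sub_apply, LinearMap.comp_apply, e, ← hβι _ (inv_mem hv) _ (inv_mem hu),
      hinv u hu, hinv v hv]
    simp
  have h0 : Φ (of ℤ F a - 1) = 0 := by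
    have : aug (⊤ : Subgroup F) * aug R * aug (⊤ : Subgroup F) ≤ LinearMap.ker Φ :=
      aug3_le (fun g _ u hu h _ => hΦ1 g h u hu)
    exact this ha
  have h1 := hsq ha2
  rw [LinearMap.mem_ker, LinearMap.sub_apply, h0, zero_sub, neg_eq_zero, LinearMap.sub_apply,
    LinearMap.comp_apply, ← map_sub, Submodule.mkQ_apply, Submodule.Quotient.mk_eq_zero] at h1
  have e : star (of ℤ F a - 1) = of ℤ F a⁻¹ - 1 := by
    simp only [star, map_sub, ext_of, ext_one, inv_one, map_one]
  rw [e] at h1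
  -- now `a - a⁻¹ ∈ J`
  have h5 : (of ℤ F a - 1) * (of ℤ F a - 1) ∈ aug R * aug R :=
    Submodule.mul_mem_mul (aug_mem haR) (aug_mem haR)
  have h6 : of ℤ F (a ^ 2) - 1 ∈ aug R * aug R := by
    have := add_mem h5 (add_mem ha2 ha2)
    convert this using 1
    rw [pow_two, map_mul]
    noncomm_ring
  have h7 : (of ℤ F (a ^ 2) - 1) * (of ℤ F a⁻¹ - 1) ∈ J :=
    Submodule.mem_sup_right (Submodule.mul_mem_mul h6 (aug_mem (Subgroup.mem_top _)))
  have h8 := J.sub_mem (J.neg_mem h1) h7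
  convert h8 using 1
  have e1 : of ℤ F (a ^ 2) * of ℤ F a⁻¹ = of ℤ F a := by
    rw [← map_mul]; congr 1; group
  simp only [mul_sub, sub_mul, e1, mul_one, one_mul]
  abel

/-- `ℤ[F]` is spanned by `F` -/
lemma top_eq_span (F : Type) [Group F] :
    (⊤ : Submodule ℤ (MonoidAlgebra ℤ F)) = Submodule.span ℤ (Set.range (of ℤ F)) := by
  symm
  rw [eq_top_iff]
  rintro x -
  induction x using MonoidAlgebra.induction_on with
  | of g => exact Submodule.subset_span ⟨g, rfl⟩
  | add x y hx hy => exact add_mem hx hy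
  | smul r x hx => exact Submodule.smul_mem _ _ hx

lemma aug3top_le {F : Type} [Group F] {A B C : Subgroup F}
    {M : Submodule ℤ (MonoidAlgebra ℤ F)}
    (h : ∀ a ∈ A, ∀ b ∈ B, ∀ c ∈ C, ∀ k : F,
      (of ℤ F a - 1) * (of ℤ F b - 1) * (of ℤ F c - 1) * of ℤ F k ∈ M) :
    aug A * aug B * aug C * ⊤ ≤ M := by
  rw [top_eq_span]
  unfold aug
  rw [Submodule.span_mul_span, Submodule.span_mul_span, Submodule.span_mul_span,
    Submodule.span_le]
  rintro _ ⟨_, ⟨_, ⟨_, ⟨a, ha, rfl⟩, _, ⟨b, hb, rfl⟩, rfl⟩, _, ⟨c, hc, rfl⟩, rfl⟩,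
    _, ⟨k, rfl⟩, rfl⟩
  exact h a ha b hb c hc k

lemma top_mul_aug_le {F : Type} [Group F] (N : Subgroup F) [N.Normal] :
    ⊤ * aug N ≤ aug N * ⊤ := by
  rw [top_eq_span]
  nth_rewrite 1 [aug]
  rw [Submodule.span_mul_span, Submodule.span_le]
  rintro _ ⟨_, ⟨k, rfl⟩, _, ⟨n, hn, rfl⟩, rfl⟩
  have hn' := Subgroup.Normal.conj_mem (inferInstance : N.Normal) n hn k
  have : (of ℤ F (k * n * k⁻¹) - 1) * of ℤ F k ∈
      aug N * Submodule.span ℤ (Set.range (of ℤ F)) :=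
    Submodule.mul_mem_mul (aug_mem hn') (Submodule.subset_span ⟨k, rfl⟩)
  have e1 : of ℤ F (k * n * k⁻¹) * of ℤ F k = of ℤ F k * of ℤ F n := by
    rw [← map_mul, ← map_mul]; congr 1; group
  simp only [mul_sub, sub_mul, e1, mul_one, one_mul] at this ⊢
  exact this

lemma augI_mono {F : Type} [Group F] {M N : Subgroup F} (h : M ≤ N) : augI M ≤ augI N := by
  refine mul_le_mul' (Submodule.span_mono ?_) le_rfl
  rintro x ⟨n, hn, rfl⟩
  exact ⟨n, h hn, rfl⟩

lemma augI_mul_le {F : Type} [Group F] (M N : Subgroup F) [N.Normal] :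
    augI M * augI N ≤ aug M * aug N * ⊤ := by
  unfold augI
  calc aug M * ⊤ * (aug N * ⊤) = aug M * (⊤ * aug N) * ⊤ := by simp only [mul_assoc]
    _ ≤ aug M * (aug N * ⊤) * ⊤ :=
      mul_le_mul' (mul_le_mul' le_rfl (top_mul_aug_le N)) le_rfl
    _ = aug M * aug N * (⊤ * ⊤) := by simp only [mul_assoc]
    _ ≤ _ := mul_le_mul' le_rfl le_top

lemma augI3_le {F : Type} [Group F] (M N P : Subgroup F) [N.Normal] [P.Normal] :
    augI M * augI N * augI P ≤ aug M * aug N * aug P * ⊤ := by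
  calc augI M * augI N * augI P ≤ aug M * aug N * ⊤ * augI P :=
      mul_le_mul' (augI_mul_le M N) le_rfl
    _ = aug M * aug N * (⊤ * aug P) * ⊤ := by simp only [augI, mul_assoc]
    _ ≤ aug M * aug N * (aug P * ⊤) * ⊤ :=
      mul_le_mul' (mul_le_mul' le_rfl (top_mul_aug_le P)) le_rfl
    _ = aug M * aug N * aug P * (⊤ * ⊤) := by simp only [mul_assoc]
    _ ≤ _ := mul_le_mul' le_rfl le_top

lemma mem_of_aug {F : Type} [Group F] {U R : Subgroup F} [R.Normal] {a : F}
    (ha : of ℤ F a - 1 ∈ aug U * aug R * aug U * ⊤) : a ∈ R := by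
  let p : MonoidAlgebra ℤ F →ₗ[ℤ] MonoidAlgebra ℤ (F ⧸ R) :=
    ext (fun g => of ℤ (F ⧸ R) (g : F ⧸ R))
  have h : aug U * aug R * aug U * ⊤ ≤ LinearMap.ker p := by
    apply aug3top_le
    intro g _ u hu h _ k
    have e : (of ℤ F g - 1) * (of ℤ F u - 1) * (of ℤ F h - 1) * of ℤ F k =
        of ℤ F (g * u * h * k) - of ℤ F (u * h * k) - of ℤ F (g * h * k) + of ℤ F (h * k)
        - of ℤ F (g * u * k) + of ℤ F (u * k) + of ℤ F (g * k) - of ℤ F k := by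
      simp only [map_mul]
      noncomm_ring
    rw [LinearMap.mem_ker, e]
    simp only [p, map_add, map_sub, ext_of, QuotientGroup.mk_mul,
      (QuotientGroup.eq_one_iff u).2 hu, mul_one, one_mul]
    abel
  have h1 := h ha
  rw [LinearMap.mem_ker] at h1
  simp only [p, map_sub, ext_of, ext_one] at h1
  have h2 := MonoidAlgebra.of_injective (sub_eq_zero.1 h1)
  rw [← QuotientGroup.eq_one_iff, h2, QuotientGroup.mk_one]

lemma restrict {F : Type} [Group F] {U R : Subgroup F} (hRU : R ≤ U) {a : F} (haU : a ∈ U)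
    (ha : of ℤ F a - 1 ∈ aug U * aug R * aug U * ⊤) :
    of ℤ U ⟨a, haU⟩ - 1 ∈ aug (⊤ : Subgroup U) * aug (R.subgroupOf U) *
      aug (⊤ : Subgroup U) := by
  classical
  let q : F → MonoidAlgebra ℤ U := fun k => if h : k ∈ U then of ℤ U ⟨k, h⟩ else 0
  have hq : ∀ g (hg : g ∈ U) k, q (g * k) = of ℤ U ⟨g, hg⟩ * q k := by
    intro g hg k
    by_cases hk : k ∈ U
    · simp only [q, hk, mul_mem hg hk, dite_true, ← map_mul]
      rfl
    · have : g * k ∉ U := fun h => hk ((Subgroup.mul_mem_cancel_left U hg).1 h)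
      simp only [q, hk, this, dite_false, mul_zero]
  let p : MonoidAlgebra ℤ F →ₗ[ℤ] MonoidAlgebra ℤ U := ext q
  have h : aug U * aug R * aug U * ⊤ ≤ Submodule.comap p
      (aug (⊤ : Subgroup U) * aug (R.subgroupOf U) * aug (⊤ : Subgroup U)) := by
    apply aug3top_le
    intro g hg u hu h hh k
    have e : (of ℤ F g - 1) * (of ℤ F u - 1) * (of ℤ F h - 1) * of ℤ F k =
        of ℤ F (g * (u * (h * k))) - of ℤ F (u * (h * k)) - of ℤ F (g * (h * k))
        + of ℤ F (h * k)
        - of ℤ F (g * (u * k)) + of ℤ F (u * k) + of ℤ F (g * k) - of ℤ F k := by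
      simp only [map_mul]
      noncomm_ring
    rw [Submodule.mem_comap, e]
    simp only [p, map_add, map_sub, ext_of, hq g hg, hq u (hRU hu), hq h hh]
    have e2 : ∀ x y z w : MonoidAlgebra ℤ U, x * (y * (z * w)) - y * (z * w) - x * (z * w)
        + z * w - x * (y * w) + y * w + x * w - w = (x - 1) * (y - 1) * ((z * w - 1) - (w - 1)) := by
      intro x y z w
      noncomm_ring
    rw [e2]
    by_cases hk : k ∈ U
    · refine Submodule.mul_mem_mul (Submodule.mul_mem_mul (aug_mem (Subgroup.mem_top _))
        (aug_mem ?_)) (sub_mem ?_ ?_)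
      · exact Subgroup.mem_subgroupOf.2 hu
      · rw [← hq h hh]
        simp only [q, mul_mem hh hk, dite_true]
        exact aug_mem (Subgroup.mem_top _)
      · simp only [q, hk, dite_true]
        exact aug_mem (Subgroup.mem_top _)
    · simp only [q, hk, dite_false, mul_zero, sub_self, zero_mem]
  have h1 := h ha
  rw [Submodule.mem_comap] at h1
  have q1 : q 1 = 1 := by
    simp only [q, one_mem, dite_true]
    exact map_one (of ℤ U)
  have qa : q a = of ℤ U ⟨a, haU⟩ := by simp only [q, haU, dite_true]
  simpa only [p, map_sub, ext_of, ext_one, q1, qa] using h1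

lemma aug_le_augI {F : Type} [Group F] {N : Subgroup F} {n : F} (hn : n ∈ N) :
    of ℤ F n - 1 ∈ augI N := by
  have := Submodule.mul_mem_mul (aug_mem hn) (Submodule.mem_top (x := (1 : MonoidAlgebra ℤ F)))
  rwa [mul_one] at this

lemma sup_mem {F : Type} [Group F] {S T : Subgroup F} [S.Normal] [T.Normal] {g : F}
    (hg : g ∈ S ⊔ T) : of ℤ F g - 1 ∈ augI S + augI T := by
  obtain ⟨s, hs, t, ht, rfl⟩ := Subgroup.mem_sup_of_normal_right.1 hg
  have h1 : (of ℤ F s - 1) * of ℤ F t ∈ augI S :=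
    Submodule.mul_mem_mul (aug_mem hs) Submodule.mem_top
  have h2 := Submodule.add_mem_sup h1 (aug_le_augI ht)
  rw [Submodule.add_eq_sup]
  convert h2 using 1
  rw [map_mul]
  noncomm_ring

lemma push {F : Type} [Group F] {R S T : Subgroup F} [S.Normal] [T.Normal]
    (hR : R ≤ S ⊔ T) {x : MonoidAlgebra ℤ (S ⊔ T : Subgroup F)}
    (hx : x ∈ aug (⊤ : Subgroup (S ⊔ T : Subgroup F)) * aug (R.subgroupOf (S ⊔ T)) *
        aug (R.subgroupOf (S ⊔ T)) + aug (R.subgroupOf (S ⊔ T)) * aug (R.subgroupOf (S ⊔ T)) *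
        aug (⊤ : Subgroup (S ⊔ T : Subgroup F))) :
    ext (fun g : (S ⊔ T : Subgroup F) => of ℤ F (g : F)) x ∈
      augI R * augI R * augI S + augI S * augI R * augI R +
        augI T * augI R * augI R + augI R * augI R * augI T := by
  set p := ext (fun g : (S ⊔ T : Subgroup F) => of ℤ F (g : F)) with hp
  have hpm : ∀ g u h : (S ⊔ T : Subgroup F), p ((of ℤ _ g - 1) * (of ℤ _ u - 1) *
      (of ℤ _ h - 1)) = (of ℤ F g - 1) * (of ℤ F u - 1) * (of ℤ F h - 1) := by
    intro g u h
    have e : (of ℤ _ g - 1) * (of ℤ _ u - 1) * (of ℤ _ h - 1) =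
        of ℤ _ (g * u * h) - of ℤ _ (u * h) - of ℤ _ (g * h) + of ℤ _ h
        - of ℤ _ (g * u) + of ℤ _ u + of ℤ _ g - 1 := by
      simp only [map_mul]
      noncomm_ring
    rw [e]
    simp only [hp, map_add, map_sub, ext_of, ext_one, Subgroup.coe_mul, Subgroup.coe_one]
    simp only [map_mul, map_one]
    noncomm_ring
  refine SetLike.le_def.1 (sup_le ?_ ?_ : _ ≤ Submodule.comap p (augI R * augI R * augI S +
    augI S * augI R * augI R + augI T * augI R * augI R + augI R * augI R * augI T)) hx
  · apply aug3_le
    intro g _ u hu v hv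
    rw [Submodule.mem_comap, hpm]
    have h := Submodule.mul_mem_mul (Submodule.mul_mem_mul (sup_mem g.2)
      (aug_le_augI (Subgroup.mem_subgroupOf.1 hu))) (aug_le_augI (Subgroup.mem_subgroupOf.1 hv))
    rw [add_mul, add_mul] at h
    refine SetLike.le_def.1 ?_ h
    exact sup_le (le_sup_right.trans (le_sup_left.trans le_sup_left))
      (le_sup_right.trans le_sup_left)
  · apply aug3_le
    intro u hu v hv g _
    rw [Submodule.mem_comap, hpm]
    have h := Submodule.mul_mem_mul (Submodule.mul_mem_mul
      (aug_le_augI (Subgroup.mem_subgroupOf.1 hu)) (aug_le_augI (Subgroup.mem_subgroupOf.1 hv)))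
      (sup_mem g.2)
    rw [mul_add] at h
    refine SetLike.le_def.1 ?_ h
    exact sup_le (le_sup_left.trans (le_sup_left.trans le_sup_left)) le_sup_right

end Stohr

/-- Theorem 5.3: if `R ⊆ S`, `R ⊆ T` and `a ∈ D(F, 𝐬𝐫𝐭 + 𝐭𝐫𝐬)`,
then `a² ∈ D(F, 𝐫𝐫𝐬 + 𝐬𝐫𝐫 + 𝐭𝐫𝐫 + 𝐫𝐫𝐭)`. -/
theorem stohr_square_general (F : Type) [Group F] [IsFreeGroup F]
    (R S T : Subgroup F) [R.Normal] [S.Normal] [T.Normal]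
    (hRS : R ≤ S) (hRT : R ≤ T) (a : F)
    (ha : (MonoidAlgebra.of ℤ F a) - 1 ∈ augI S * augI R * augI T + augI T * augI R * augI S) :
    (MonoidAlgebra.of ℤ F (a ^ 2)) - 1 ∈
      augI R * augI R * augI S + augI S * augI R * augI R +
        augI T * augI R * augI R + augI R * augI R * augI T := by
  have hU : R ≤ S ⊔ T := hRS.trans le_sup_left
  have h1 : (MonoidAlgebra.of ℤ F a) - 1 ∈
      aug (S ⊔ T) * aug R * aug (S ⊔ T) * (⊤ : Submodule ℤ (MonoidAlgebra ℤ F)) := by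
    refine Stohr.augI3_le _ _ _ (SetLike.le_def.1 (sup_le ?_ ?_) ha)
    · exact mul_le_mul' (mul_le_mul' (Stohr.augI_mono le_sup_left) le_rfl)
        (Stohr.augI_mono le_sup_right)
    · exact mul_le_mul' (mul_le_mul' (Stohr.augI_mono le_sup_right) le_rfl)
        (Stohr.augI_mono le_sup_left)
  have haR : a ∈ R := Stohr.mem_of_aug h1
  have h2 := Stohr.restrict hU (hU haR) h1
  have h3 := Stohr.main_free (R := R.subgroupOf (S ⊔ T)) (Subgroup.mem_subgroupOf.2 haR) h2
  have h4 := Stohr.push hU h3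
  rw [map_sub, Stohr.ext_of, Stohr.ext_one] at h4
  simpa only [Subgroup.coe_pow, Subgroup.coe_one, map_one] using h4
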